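/- arXiv:2505.06051 — 3 statements merged into one kernel-verified Lean document; each statement's English description precedes it below -/
import Mathlib

section
/- Let (τ_L)_{L≥2} be nonnegative reals with τ_L → 0, and for each L let X and Y_L be independent centred real Gaussian random variables of variance 1 and τ_L², respectively; let a_L > 0 be defined by P(X > a_L) = L^{−d}. Then for every s ∈ ℝ, L^d · P(X + Y_L ≥ a_L√(1+τ_L²) + s/a_L) → e^{−s} as L → ∞. -/
open MeasureTheory ProbabilityTheory Filter
open scoped ENNReal NNReal

noncomputable section

lemma aux_tail (a u : ℝ) (ha : 0 < a) :
    gaussianReal 0 1 (Set.Ioi (a + u / a)) = ENNReal.ofReal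
      (gaussianPDFReal 0 1 a * a⁻¹ * ∫ t in Set.Ioi u, Real.exp (-t - t ^ 2 / (2 * a ^ 2))) := by
  rw [gaussianReal_apply_eq_integral 0 one_ne_zero]
  congr 1
  have h1 : ∫ x in Set.Ioi (a + u / a), gaussianPDFReal 0 1 x
      = ∫ y in Set.Ioi (u / a), gaussianPDFReal 0 1 (a + y) := by
    have := (measurePreserving_add_left (volume : Measure ℝ) a).setIntegral_preimage_emb
      (measurableEmbedding_addLeft a) (gaussianPDFReal 0 1) (Set.Ioi (a + u / a))
    rw [← this]
    congr 2
    ext y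
    simp
  have h2 := integral_comp_mul_left_Ioi (fun y => gaussianPDFReal 0 1 (a + y)) u
    (inv_pos.mpr ha)
  simp only [inv_inv, smul_eq_mul] at h2
  rw [h1, div_eq_inv_mul]
  have h3 : ∫ x in Set.Ioi u, gaussianPDFReal 0 1 (a + a⁻¹ * x)
     = gaussianPDFReal 0 1 a * ∫ t in Set.Ioi u, Real.exp (-t - t ^ 2 / (2 * a ^ 2)) := by
    rw [← integral_const_mul]
    congr 1
    ext t
    simp only [gaussianPDFReal]
    rw [mul_assoc (√(2 * Real.pi * ((1 : ℝ≥0) : ℝ)))⁻¹, ← Real.exp_add]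
    congr 2
    simp
    field_simp
    ring
  rw [h3] at h2
  rw [mul_right_comm, h2]
  field_simp

lemma aux_lim (a u : ℕ → ℝ) (s : ℝ) (ha : Tendsto a atTop atTop)
    (hu : Tendsto u atTop (nhds s)) :
    Tendsto (fun n => ∫ t in Set.Ioi (u n), Real.exp (-t - t ^ 2 / (2 * a n ^ 2))) atTop
      (nhds (Real.exp (-s))) := by
  rw [← integral_exp_neg_Ioi s]
  simp_rw [← integral_indicator (measurableSet_Ioi (α := ℝ))]
  refine tendsto_integral_filter_of_dominated_convergence
    ((Set.Ioi (s - 1)).indicator fun t => Real.exp (-t)) ?_ ?_ ?_ ?_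
  · refine Eventually.of_forall fun n => ?_
    refine (Measurable.indicator (by fun_prop) measurableSet_Ioi).aestronglyMeasurable
  · filter_upwards [hu.eventually (lt_mem_nhds (sub_one_lt s))] with n hn
    refine Eventually.of_forall fun t => ?_
    by_cases h : u n < t
    · rw [Set.indicator_of_mem (by exact h), Set.indicator_of_mem (by exact hn.trans h),
        Real.norm_of_nonneg (Real.exp_pos _).le, Real.exp_le_exp]
      have : 0 ≤ t ^ 2 / (2 * a n ^ 2) := by positivity
      linarith
    · rw [Set.indicator_of_notMem (by exact h), norm_zero]
      exact Set.indicator_nonneg (fun _ _ => (Real.exp_pos _).le) _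
  · rw [integrable_indicator_iff measurableSet_Ioi]
    exact integrableOn_exp_neg_Ioi (s - 1)
  · have hne : ∀ᵐ t : ℝ, t ≠ s := by simp [ae_iff]
    filter_upwards [hne] with t ht
    rcases lt_or_gt_of_ne ht with h | h
    · rw [Set.indicator_of_notMem (by simpa using h.le)]
      refine tendsto_const_nhds.congr' ?_
      filter_upwards [hu.eventually (lt_mem_nhds h)] with n hn
      rw [Set.indicator_of_notMem (by simpa using hn.le)]
    · rw [Set.indicator_of_mem (by exact h)]
      have h0 : Tendsto (fun n => Real.exp (-t - t ^ 2 / (2 * a n ^ 2))) atTop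
          (nhds (Real.exp (-t))) := by
        refine (Real.continuous_exp.tendsto _).comp ?_
        have : Tendsto (fun n => t ^ 2 / (2 * a n ^ 2)) atTop (nhds 0) :=
          Tendsto.div_atTop tendsto_const_nhds
            (((tendsto_pow_atTop two_ne_zero).comp ha).const_mul_atTop two_pos)
        simpa using tendsto_const_nhds.sub this
      refine h0.congr' ?_
      filter_upwards [hu.eventually (gt_mem_nhds h)] with n hn
      rw [Set.indicator_of_mem (by exact hn)]

lemma aux_sum (t b : ℝ) :
    ((gaussianReal 0 1).prod (gaussianReal 0 (Real.toNNReal (t ^ 2))))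
      {p : ℝ × ℝ | b * Real.sqrt (1 + t ^ 2) ≤ p.1 + p.2} = gaussianReal 0 1 (Set.Ioi b) := by
  have hσ : 0 < Real.sqrt (1 + t ^ 2) := by positivity
  have hnull : NullSingletonClass (gaussianReal 0 1) := nullSingletonClass_gaussianReal one_ne_zero
  have h1 := gaussianReal_conv_gaussianReal (m₁ := 0) (m₂ := 0) (v₁ := 1)
    (v₂ := Real.toNNReal (t ^ 2))
  have h2 : gaussianReal (0 + 0) (1 + Real.toNNReal (t ^ 2))
      = (gaussianReal 0 1).map (Real.sqrt (1 + t ^ 2) * ·) := by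
    rw [gaussianReal_map_const_mul]
    congr 1
    · simp
    · ext
      simp [Real.sq_sqrt (show 0 ≤ 1 + t ^ 2 by positivity), sq_nonneg]
  rw [h2] at h1
  have h3 := congrArg (fun m => m (Set.Ici (b * Real.sqrt (1 + t ^ 2)))) h1
  simp only [Measure.conv] at h3
  rw [Measure.map_apply (by fun_prop) measurableSet_Ici,
    Measure.map_apply (by fun_prop) measurableSet_Ici] at h3
  have e1 : (fun x : ℝ × ℝ => x.1 + x.2) ⁻¹' Set.Ici (b * Real.sqrt (1 + t ^ 2))
    = {p : ℝ × ℝ | b * Real.sqrt (1 + t ^ 2) ≤ p.1 + p.2} := rfl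
  have e2 : (fun x => Real.sqrt (1 + t ^ 2) * x) ⁻¹' Set.Ici (b * Real.sqrt (1 + t ^ 2))
     = Set.Ici b := by
    ext x
    simp only [Set.mem_preimage, Set.mem_Ici]
    rw [mul_comm b, mul_le_mul_iff_right₀ hσ]
  rw [e1, e2] at h3
  rw [h3]
  exact measure_congr Ioi_ae_eq_Ici.symm

lemma aux_atTop (d : ℕ) (hd : 1 ≤ d) (a : ℕ → ℝ)
    (ha_def : ∀ L : ℕ, 2 ≤ L →
      gaussianReal 0 1 (Set.Ioi (a L)) = ENNReal.ofReal (1 / (L : ℝ) ^ d)) :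
    Tendsto a atTop atTop := by
  rw [tendsto_atTop]
  intro M
  have hpos : 0 < gaussianReal 0 1 (Set.Ioi M) := by
    rw [pos_iff_ne_zero]
    intro h
    have := gaussianReal_absolutelyContinuous' 0 (one_ne_zero (α := ℝ≥0)) h
    simp at this
  have h0 : Tendsto (fun L : ℕ => ENNReal.ofReal (1 / (L : ℝ) ^ d)) atTop (nhds 0) := by
    rw [← ENNReal.ofReal_zero]
    refine ENNReal.tendsto_ofReal ?_
    exact Tendsto.div_atTop tendsto_const_nhds
      ((tendsto_pow_atTop (by omega)).comp tendsto_natCast_atTop_atTop)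
  filter_upwards [h0.eventually (gt_mem_nhds hpos), eventually_ge_atTop 2] with L hL h2
  by_contra! hc
  rw [← ha_def L h2] at hL
  exact absurd hL (not_lt.mpr (measure_mono (Set.Ioi_subset_Ioi hc.le)))

/-- Lemma 2.3, first part.
Let `X, Y_L` be independent centred Gaussians of variance `1` and `τ_L²` with `τ_L → 0`,
and let `a_L > 0` be defined through `P(X > a_L) = L^{−d}`. Then for every `s ∈ ℝ`,
`L^d · P(X + Y_L ≥ a_L√(1+τ_L²) + s/a_L) → e^{−s}` as `L → ∞`.
(The pair `(X, Y_L)` is realised as the two coordinates under the product measure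
`N(0,1) ⊗ N(0,τ_L²)` on `ℝ × ℝ`.) -/
theorem gaussian_sum_tail
    (d : ℕ) (hd : 1 ≤ d)
    (τ : ℕ → ℝ) (hτ_nonneg : ∀ L, 0 ≤ τ L)
    (hτ : Tendsto τ atTop (nhds 0))
    (a : ℕ → ℝ) (ha_pos : ∀ L : ℕ, 2 ≤ L → 0 < a L)
    (ha_def : ∀ L : ℕ, 2 ≤ L →
      gaussianReal 0 1 (Set.Ioi (a L)) = ENNReal.ofReal (1 / (L : ℝ) ^ d))
    (s : ℝ) :
    Tendsto
      (fun L : ℕ =>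
        (L : ℝ≥0∞) ^ d *
          ((gaussianReal 0 1).prod (gaussianReal 0 (Real.toNNReal (τ L ^ 2))))
            {p : ℝ × ℝ | a L * Real.sqrt (1 + τ L ^ 2) + s / a L ≤ p.1 + p.2})
      atTop (nhds (ENNReal.ofReal (Real.exp (-s)))) := by
  have hat := aux_atTop d hd a ha_def
  have hσ : Tendsto (fun L => Real.sqrt (1 + τ L ^ 2)) atTop (nhds 1) := by
    have : Tendsto (fun L => 1 + τ L ^ 2) atTop (nhds (1 + 0 ^ 2)) :=
      tendsto_const_nhds.add (hτ.pow 2)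
    have h := (Real.continuous_sqrt.tendsto _).comp this
    simpa [Function.comp_def] using h
  have hu : Tendsto (fun L => s / Real.sqrt (1 + τ L ^ 2)) atTop (nhds s) := by
    have h := (tendsto_const_nhds (x := s)).div hσ one_ne_zero
    rw [div_one] at h
    exact h
  have l1 := aux_lim a _ s hat hu
  have l0 := aux_lim a (fun _ => 0) 0 hat tendsto_const_nhds
  have l := ENNReal.tendsto_ofReal (l1.div l0 (Real.exp_pos _).ne')
  simp only [neg_zero, Real.exp_zero, div_one] at l
  refine l.congr' ?_
  filter_upwards [eventually_ge_atTop 2] with L hL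
  have ha := ha_pos L hL
  have hs : 0 < Real.sqrt (1 + τ L ^ 2) := by positivity
  have e : a L * Real.sqrt (1 + τ L ^ 2) + s / a L
      = (a L + s / Real.sqrt (1 + τ L ^ 2) / a L) * Real.sqrt (1 + τ L ^ 2) := by
    field_simp
  have hLp : (0 : ℝ) < (L : ℝ) ^ d := by
    have : (0 : ℝ) < L := by exact_mod_cast (by omega : 0 < L)
    positivity
  rw [e, aux_sum, aux_tail _ _ ha]
  have h0 := aux_tail (a L) 0 ha
  rw [zero_div, add_zero, ha_def L hL] at h0
  have hc : 0 < gaussianPDFReal 0 1 (a L) * (a L)⁻¹ :=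
    mul_pos (gaussianPDFReal_pos _ _ _ one_ne_zero) (inv_pos.mpr ha)
  set c := gaussianPDFReal 0 1 (a L) * (a L)⁻¹
  set I0 := ∫ t in Set.Ioi (0 : ℝ), Real.exp (-t - t ^ 2 / (2 * a L ^ 2))
  have hI0 : 0 ≤ I0 := integral_nonneg fun _ => (Real.exp_pos _).le
  rw [ENNReal.ofReal_eq_ofReal_iff (by positivity) (by positivity)] at h0
  have hL' : ((L : ℝ≥0∞)) ^ d = ENNReal.ofReal ((L : ℝ) ^ d) := by
    rw [ENNReal.ofReal_pow (by positivity), ENNReal.ofReal_natCast]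
  rw [hL', ← ENNReal.ofReal_mul hLp.le]
  congr 1
  have hI : I0 ≠ 0 := by
    intro h
    rw [h, mul_zero] at h0
    exact (one_div_pos.mpr hLp).ne' h0
  rw [Pi.div_apply]
  have : (L : ℝ) ^ d * (c * I0) = 1 := by rw [← h0]; field_simp
  rw [div_eq_iff hI]
  linear_combination (-(∫ t in Set.Ioi (s / Real.sqrt (1 + τ L ^ 2)), Real.exp (-t - t ^ 2 / (2 * a L ^ 2)))) * this

end
end

section
/- With θ := 2d+1, for every s ∈ ℝ there exists L₀ ≥ 1 such that for all L ≥ L₀ and every z ∈ ℤ^d, the events { max_{x ∈ Q_{R_L,z}} Ξ_L(x) ≥ a_L^Ξ − s/a_L } and { max_{x ∈ Q_{R_L + r_L, z}} ξ_L(x) ≤ a_L − θ } are disjoint; that is, if the maximum of ξ_L over Q_{R_L+r_L,z} is at most a_L − θ, then the maximum of Ξ_L over Q_{R_L,z} is below a_L^Ξ − s/a_L. -/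
open MeasureTheory ProbabilityTheory Filter Finset

noncomputable section

/-- Euclidean (ℓ²) norm of a point of `ℤ^d`. -/
def znorm {d : ℕ} (x : Fin d → ℤ) : ℝ := Real.sqrt (∑ i, ((x i : ℝ)) ^ 2)

/-- The discrete box `[-a/2, a/2]^d ∩ ℤ^d`. -/
def QBox (d : ℕ) (a : ℝ) : Finset (Fin d → ℤ) :=
  Finset.Icc (fun _ => Int.ceil (-(a / 2))) (fun _ => Int.floor (a / 2))

/-- The translated box `z + ([-a/2, a/2]^d ∩ ℤ^d)`. -/
def QBoxAt {d : ℕ} (a : ℝ) (z : Fin d → ℤ) : Finset (Fin d → ℤ) :=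
  (QBox d a).image (fun x => z + x)

/-- The box `[-1,1]^d ⊂ ℝ^d`. -/
def unitBox (d : ℕ) : Set (Fin d → ℝ) := Set.univ.pi fun _ => Set.Icc (-1) 1

/-- Nearest-neighbour adjacency on `ℤ^d`. -/
def Adj {d : ℕ} (x y : Fin d → ℤ) : Prop := (∑ i, |x i - y i|) = 1

instance {d : ℕ} (x y : Fin d → ℤ) : Decidable (Adj x y) := by
  unfold Adj; infer_instance

/-- `(lam, f)` is an eigenpair of the Anderson Hamiltonian `Δ + V` on `C ⊂ ℤ^d`
with Dirichlet boundary conditions (`f` vanishes outside `C`). -/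
def IsDirichletEigenpair {d : ℕ} (C : Finset (Fin d → ℤ)) (V : (Fin d → ℤ) → ℝ)
    (lam : ℝ) (f : (Fin d → ℤ) → ℝ) : Prop :=
  (∀ x ∉ C, f x = 0) ∧
  ∀ x ∈ C, ((∑ y ∈ C, if Adj x y then f y else 0) - 2 * (d : ℝ) * f x) + V x * f x = lam * f x

/-- `lam` is the largest Dirichlet eigenvalue of `Δ + V` on `C`. -/
def IsTopEigenvalue {d : ℕ} (C : Finset (Fin d → ℤ)) (V : (Fin d → ℤ) → ℝ) (lam : ℝ) : Prop :=
  (∃ f, f ≠ 0 ∧ IsDirichletEigenpair C V lam f) ∧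
  ∀ mu g, g ≠ 0 → IsDirichletEigenpair C V mu g → mu ≤ lam

/-- `(lam, f)` is the principal Dirichlet eigenvalue of `Δ + V` on `C` together with its
ℓ²-normalised nonnegative principal eigenfunction. -/
def IsPrincipalEigenpair {d : ℕ} (C : Finset (Fin d → ℤ)) (V : (Fin d → ℤ) → ℝ)
    (lam : ℝ) (f : (Fin d → ℤ) → ℝ) : Prop :=
  IsDirichletEigenpair C V lam f ∧ (∑ x ∈ C, f x ^ 2) = 1 ∧ (∀ x, 0 ≤ f x) ∧
  ∀ mu g, g ≠ 0 → IsDirichletEigenpair C V mu g → mu ≤ lam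

/-- A complete orthonormal eigenbasis of `Δ + V` on `C` with Dirichlet boundary
conditions, the eigenvalues being listed in nonincreasing order: `lam k` is the
`(k+1)`-th largest eigenvalue (with multiplicity) and `phi k` the associated
normalised eigenfunction. -/
def IsDirichletEigenbasis {d : ℕ} (C : Finset (Fin d → ℤ)) (V : (Fin d → ℤ) → ℝ)
    (lam : ℕ → ℝ) (phi : ℕ → (Fin d → ℤ) → ℝ) : Prop :=
  (∀ k < C.card, IsDirichletEigenpair C V (lam k) (phi k)) ∧
  (∀ j < C.card, ∀ k < C.card, j ≤ k → lam k ≤ lam j) ∧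
  (∀ j < C.card, ∀ k < C.card, (∑ x ∈ C, phi j x * phi k x) = if j = k then 1 else 0)

/-- Covariance of two real random variables. -/
def covar {Ω : Type} [MeasurableSpace Ω] (P : Measure Ω) (X Y : Ω → ℝ) : ℝ :=
  ∫ ω, (X ω - ∫ ω', X ω' ∂P) * (Y ω - ∫ ω', Y ω' ∂P) ∂P

/-- The basic setting of the paper: for each `L`, a centred stationary Gaussian field
`ξ_L` on `ℤ^d` with nonnegative covariance function `v_L`, `v_L(0) = 1`; `d_L` is defined
through `sup_{|x|=1} v_L(x) = 1 − 1/d_L` and `a_L > 0` through `P(ξ_L(0) > a_L) = L^{−d}`. -/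
structure GaussSetting (d : ℕ) (Ω : Type) [MeasurableSpace Ω] where
  P : Measure Ω
  hP : IsProbabilityMeasure P
  ξ : ℕ → Ω → (Fin d → ℤ) → ℝ
  v : ℕ → (Fin d → ℤ) → ℝ
  meas : ∀ L x, Measurable fun ω => ξ L ω x
  v_nonneg : ∀ L x, 0 ≤ v L x
  v_zero : ∀ L, v L 0 = 1
  gaussian : ∀ L, 2 ≤ L → ∀ (s : Finset (Fin d → ℤ)) (c : (Fin d → ℤ) → ℝ),
    Measure.map (fun ω => ∑ x ∈ s, c x * ξ L ω x) P
      = gaussianReal 0 (Real.toNNReal (∑ x ∈ s, ∑ y ∈ s, c x * c y * v L (x - y)))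
  dL : ℕ → ℝ
  dL_pos : ∀ L, 2 ≤ L → 0 < dL L
  dL_def : ∀ L, 2 ≤ L →
    IsGreatest {t : ℝ | ∃ x : Fin d → ℤ, znorm x = 1 ∧ t = v L x} (1 - 1 / dL L)
  aL : ℕ → ℝ
  aL_pos : ∀ L, 2 ≤ L → 0 < aL L
  aL_def : ∀ L, 2 ≤ L →
    P {ω | aL L < ξ L ω 0} = ENNReal.ofReal (1 / (L : ℝ) ^ d)

namespace GaussSetting

variable {d : ℕ} {Ω : Type} [MeasurableSpace Ω] (S : GaussSetting d Ω)

/-- The shape `S_L(x) = a_L (1 − v_L(x))`. -/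
def shape (L : ℕ) (x : Fin d → ℤ) : ℝ := S.aL L * (1 - S.v L x)

/-- Long-range decay assumption (I):
`sup_{|x| ≥ exp(√(ln L))} v_L(x) ln|x| → 0` as `L → ∞`. -/
def LongRangeDecay : Prop :=
  ∀ ε > (0 : ℝ), ∀ᶠ L : ℕ in atTop, ∀ x : Fin d → ℤ,
    Real.exp (Real.sqrt (Real.log L)) ≤ znorm x → S.v L x * Real.log (znorm x) ≤ ε

/-- Short-range decay assumption (II), with constants `c, c' > 0`. -/
def ShortRangeDecay (c c' : ℝ) : Prop :=
  0 < c ∧ 0 < c' ∧ ∀ L, 2 ≤ L → ∀ x : Fin d → ℤ, x ≠ 0 →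
    1 - Real.exp (c' * znorm x) / S.dL L ≤ S.v L x ∧ S.v L x ≤ 1 - c / S.dL L

/-- Assumption 1: `d_L ≪ a_L`. -/
def Assumption1 : Prop := Tendsto (fun L => S.dL L / S.aL L) atTop (nhds 0)

/-- The fluctuation field `ζ_{L,y}(x) = ξ_L(x) − ξ_L(y) v_L(x − y)`. -/
def zeta (L : ℕ) (y x : Fin d → ℤ) (ω : Ω) : ℝ :=
  S.ξ L ω x - S.ξ L ω y * S.v L (x - y)

/-- The field `Φ_L(y) = ∑_{x ∈ Q_{r_L}, x ≠ 0} φ̄_L(x)² ζ_{L,y}(x + y)`. -/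
def Phi (r : ℕ → ℝ) (phiBar : ℕ → (Fin d → ℤ) → ℝ) (L : ℕ) (y : Fin d → ℤ)
    (ω : Ω) : ℝ :=
  ∑ x ∈ (QBox d (r L)).erase 0, phiBar L x ^ 2 * S.zeta L y (x + y) ω

end GaussSetting

/-- The auxiliary mesoscopic data: the scales `r_L, R_L`, the principal eigenpair
`(λ̄_L, φ̄_L)` of `Δ − S_L` on `Q_{r_L}` and `τ_L` with `τ_L² = Var(Φ_L(0))`. -/
structure MesoData {d : ℕ} {Ω : Type} [MeasurableSpace Ω] (S : GaussSetting d Ω) where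
  rL : ℕ → ℝ
  RL : ℕ → ℝ
  lamBar : ℕ → ℝ
  phiBar : ℕ → (Fin d → ℤ) → ℝ
  tau : ℕ → ℝ
  rL_lower : ∀ L, 2 ≤ L → Real.log (S.aL L) ≤ Real.log (rL L)
  rL_upper : Tendsto (fun L => Real.log (rL L) / Real.sqrt (S.aL L)) atTop (nhds 0)
  RL_lower : Tendsto (fun L => S.aL L / Real.log (RL L)) atTop (nhds 0)
  RL_upper : Tendsto (fun L => Real.log (RL L) / (S.aL L * (S.aL L / S.dL L))) atTop (nhds 0)
  principal : ∀ L, 2 ≤ L →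
    IsPrincipalEigenpair (QBox d (rL L)) (fun x => -(S.shape L x)) (lamBar L) (phiBar L)
  tau_nonneg : ∀ L, 0 ≤ tau L
  tau_def : ∀ L, 2 ≤ L → tau L ^ 2 = variance (S.Phi rL phiBar L 0) S.P

/-- Assumption 2: `τ_L ≪ a_L^{-1} (a_L/d_L)^{1/2}`. -/
def Assumption2 {d : ℕ} {Ω : Type} [MeasurableSpace Ω] (S : GaussSetting d Ω)
    (M : MesoData S) : Prop :=
  Tendsto (fun L => S.aL L * M.tau L * Real.sqrt (S.dL L / S.aL L)) atTop (nhds 0)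

/-- The event `E¹_{L,x₀} = {|ξ_L(x₀) − a_L| < θ}`, `θ = 2d+1`. -/
def EventE1 {d : ℕ} {Ω : Type} [MeasurableSpace Ω] (S : GaussSetting d Ω) (L : ℕ)
    (x₀ : Fin d → ℤ) : Set Ω :=
  {ω | |S.ξ L ω x₀ - S.aL L| < 2 * (d : ℝ) + 1}

/-- The event `E²_{L,x₀} = {|ζ_{L,x₀}(x)| ≤ S_L(x−x₀)/10, ∀ x ∈ Q_{2R_L,x₀}}`. -/
def EventE2 {d : ℕ} {Ω : Type} [MeasurableSpace Ω] (S : GaussSetting d Ω) (RL : ℕ → ℝ)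
    (L : ℕ) (x₀ : Fin d → ℤ) : Set Ω :=
  {ω | ∀ x ∈ QBoxAt (2 * RL L) x₀, |S.zeta L x₀ x ω| ≤ S.shape L (x - x₀) / 10}

/-- The event `E³_{L,x₀}` controlling the fluctuation field on `Q_{R_L,x₀}`. -/
def EventE3 {d : ℕ} {Ω : Type} [MeasurableSpace Ω] (S : GaussSetting d Ω) (RL : ℕ → ℝ)
    (κ : ℝ) (L : ℕ) (x₀ : Fin d → ℤ) : Set Ω :=
  {ω | ∀ x ∈ QBoxAt (RL L) x₀, x ≠ x₀ →
    |S.zeta L x₀ x ω| ≤ Real.sqrt (variance (S.zeta L x₀ x) S.P) *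
      (S.aL L / S.dL L) ^ (κ * znorm (x - x₀)) *
      Real.sqrt (max 1 (|S.ξ L ω x₀ - S.aL L| * S.aL L))}

/-- The event `E_{L,x₀} = E¹ ∩ E² ∩ E³`. -/
def EventE {d : ℕ} {Ω : Type} [MeasurableSpace Ω] (S : GaussSetting d Ω) (RL : ℕ → ℝ)
    (κ : ℝ) (L : ℕ) (x₀ : Fin d → ℤ) : Set Ω :=
  EventE1 S L x₀ ∩ EventE2 S RL L x₀ ∩ EventE3 S RL κ L x₀

end

/-- A lattice vector of ℓ¹-norm one is a signed unit vector. -/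
theorem aux_unit {d : ℕ} (x y : Fin d → ℤ) (h : Adj x y) :
    ∃ i : Fin d, ∃ e : Bool, y = x + Pi.single i (if e then (1 : ℤ) else -1) := by
  unfold Adj at h
  have hex : ∃ i, x i - y i ≠ 0 := by
    by_contra hcon
    push Not at hcon
    rw [Finset.sum_eq_zero (fun i _ => by rw [hcon i]; simp)] at h
    exact absurd h (by norm_num)
  obtain ⟨i, hi⟩ := hex
  have h1 := Finset.add_sum_erase Finset.univ (fun i => |x i - y i|) (Finset.mem_univ i)
  simp only [h] at h1
  have hpos : 1 ≤ |x i - y i| := Int.one_le_abs hi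
  have hnn : ∀ j ∈ Finset.univ.erase i, 0 ≤ |x j - y j| := fun j _ => abs_nonneg _
  have hs0 := Finset.sum_nonneg hnn
  have hs : ∑ j ∈ Finset.univ.erase i, |x j - y j| = 0 := by linarith
  have hz := (Finset.sum_eq_zero_iff_of_nonneg hnn).1 hs
  have hone : |x i - y i| = 1 := by linarith
  have hoff : ∀ j, j ≠ i → y j = x j := by
    intro j hj
    have := abs_eq_zero.1 (hz j (by simp [hj]))
    linarith
  rcases (abs_eq (by norm_num : (0 : ℤ) ≤ 1)).1 hone with h2 | h2
  · refine ⟨i, false, ?_⟩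
    funext j
    by_cases hj : j = i
    · subst hj; simp; linarith
    · simp [hj, hoff j hj]
  · refine ⟨i, true, ?_⟩
    funext j
    by_cases hj : j = i
    · subst hj; simp; linarith
    · simp [hj, hoff j hj]

theorem aux_deg {d : ℕ} (C : Finset (Fin d → ℤ)) (x : Fin d → ℤ) :
    ((C.filter (fun y => Adj x y)).card : ℝ) ≤ 2 * (d : ℝ) := by
  have hsub : C.filter (fun y => Adj x y) ⊆
      (Finset.univ : Finset (Fin d × Bool)).image
        (fun p => x + Pi.single p.1 (if p.2 then (1 : ℤ) else -1)) := by
    intro y hy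
    obtain ⟨i, e, he⟩ := aux_unit x y (Finset.mem_filter.1 hy).2
    exact Finset.mem_image.2 ⟨(i, e), Finset.mem_univ _, he.symm⟩
  have h1 := (Finset.card_le_card hsub).trans Finset.card_image_le
  rw [Finset.card_univ, Fintype.card_prod, Fintype.card_fin, Fintype.card_bool] at h1
  have : ((C.filter (fun y => Adj x y)).card : ℝ) ≤ ((d * 2 : ℕ) : ℝ) := by exact_mod_cast h1
  push_cast at this
  linarith

theorem adj_symm {d : ℕ} (x y : Fin d → ℤ) : Adj x y ↔ Adj y x := by
  unfold Adj
  simp only [abs_sub_comm]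

/-- The adjacency form is bounded by `2d`. -/
theorem aux_form {d : ℕ} (C : Finset (Fin d → ℤ)) (f : (Fin d → ℤ) → ℝ) :
    ∑ x ∈ C, f x * (∑ y ∈ C, if Adj x y then f y else 0) ≤ 2 * (d : ℝ) * ∑ x ∈ C, f x ^ 2 := by
  have h1 : ∑ x ∈ C, f x * (∑ y ∈ C, if Adj x y then f y else 0)
      ≤ ∑ x ∈ C, ∑ y ∈ C, ((if Adj x y then f x ^ 2 / 2 else 0) +
          (if Adj x y then f y ^ 2 / 2 else 0)) := by
    refine Finset.sum_le_sum fun x _ => ?_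
    rw [Finset.mul_sum]
    refine Finset.sum_le_sum fun y _ => ?_
    split_ifs
    · nlinarith [sq_nonneg (f x - f y)]
    · simp
  have h2 : ∑ x ∈ C, ∑ y ∈ C, (if Adj x y then f y ^ 2 / 2 else 0)
      = ∑ x ∈ C, ∑ y ∈ C, (if Adj x y then f x ^ 2 / 2 else 0) := by
    rw [Finset.sum_comm]
    refine Finset.sum_congr rfl fun x _ => Finset.sum_congr rfl fun y _ => ?_
    simp only [adj_symm y x]
  have h3 : ∑ x ∈ C, ∑ y ∈ C, (if Adj x y then f x ^ 2 / 2 else 0)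
      ≤ ∑ x ∈ C, (d : ℝ) * f x ^ 2 := by
    refine Finset.sum_le_sum fun x _ => ?_
    rw [← Finset.sum_filter, Finset.sum_const, nsmul_eq_mul]
    nlinarith [aux_deg C x, sq_nonneg (f x)]
  simp only [Finset.sum_add_distrib] at h1
  rw [h2] at h1
  rw [← Finset.mul_sum] at h3
  linarith

theorem mem_QBox {d : ℕ} (a : ℝ) (x : Fin d → ℤ) :
    x ∈ QBox d a ↔ ∀ i, -(a / 2) ≤ (x i : ℝ) ∧ (x i : ℝ) ≤ a / 2 := by
  unfold QBox
  rw [Finset.mem_Icc, Pi.le_def, Pi.le_def, ← forall_and]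
  simp only [Int.ceil_le, Int.le_floor]

/-- A nonnegative eigenfunction on a box that vanishes at the origin vanishes everywhere. -/
theorem aux_zero {d : ℕ} (a : ℝ) (V : (Fin d → ℤ) → ℝ) (lam : ℝ) (f : (Fin d → ℤ) → ℝ)
    (hf : IsDirichletEigenpair (QBox d a) V lam f) (hnn : ∀ x, 0 ≤ f x) (h0 : f 0 = 0) :
    ∀ n : ℕ, ∀ x ∈ QBox d a, (∑ i, |x i|) = (n : ℤ) → f x = 0 := by
  intro n
  induction n with
  | zero =>
    intro x _ hx
    have hz := (Finset.sum_eq_zero_iff_of_nonneg (fun j _ => abs_nonneg (x j))).1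
      (by simpa using hx)
    have : x = 0 := by
      funext j
      exact abs_eq_zero.1 (hz j (Finset.mem_univ j))
    rw [this, h0]
  | succ n ih =>
    intro x hxC hx
    have hex : ∃ i, x i ≠ 0 := by
      by_contra hcon
      push Not at hcon
      rw [Finset.sum_eq_zero (fun i _ => by rw [hcon i]; simp)] at hx
      omega
    obtain ⟨i, hi⟩ := hex
    have hxi := (mem_QBox a x).1 hxC i
    -- the neighbour closer to the origin
    obtain ⟨t, ht1, ht2, htC⟩ : ∃ t : ℤ, |x i - t| = 1 ∧ |t| = |x i| - 1 ∧
        (-(a / 2) ≤ (t : ℝ) ∧ (t : ℝ) ≤ a / 2) := by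
      rcases lt_or_gt_of_ne hi with hneg | hpos
      · refine ⟨x i + 1, by norm_num, ?_, ?_⟩
        · rw [abs_of_nonpos (by omega), abs_of_neg hneg]; ring
        · have : (x i : ℝ) + 1 ≤ 0 := by exact_mod_cast hneg
          push_cast
          constructor <;> linarith [hxi.1, hxi.2]
      · refine ⟨x i - 1, by norm_num, ?_, ?_⟩
        · rw [abs_of_nonneg (by omega), abs_of_pos hpos]
        · have : (1 : ℝ) ≤ (x i : ℝ) := by exact_mod_cast hpos
          push_cast
          constructor <;> linarith [hxi.1, hxi.2]
    set y : Fin d → ℤ := Function.update x i t with hy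
    have hyi : y i = t := by simp [hy]
    have hyj : ∀ j, j ≠ i → y j = x j := fun j hj => by simp [hy, hj]
    have hyC : y ∈ QBox d a := by
      rw [mem_QBox]
      intro j
      by_cases hj : j = i
      · subst hj; rw [hyi]; exact htC
      · rw [hyj j hj]; exact (mem_QBox a x).1 hxC j
    have hadj : Adj y x := by
      unfold Adj
      rw [Finset.sum_eq_single i]
      · rw [hyi, abs_sub_comm]; exact ht1
      · intro j _ hj; rw [hyj j hj]; simp
      · intro h; exact absurd (Finset.mem_univ i) h
    have hsum : (∑ j, |y j|) = (n : ℤ) := by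
      rw [← Finset.add_sum_erase _ _ (Finset.mem_univ i)] at hx ⊢
      rw [Finset.sum_congr rfl (fun j hj => by rw [hyj j (Finset.ne_of_mem_erase hj)]), hyi, ht2]
      push_cast at hx
      linarith
    have hfy := ih y hyC hsum
    have he := hf.2 y hyC
    rw [hfy] at he
    simp only [mul_zero, sub_zero, add_zero] at he
    have hz := (Finset.sum_eq_zero_iff_of_nonneg (fun w _ => by
      split_ifs
      · exact hnn w
      · exact le_refl _)).1 he x hxC
    rwa [if_pos hadj] at hz

/-- The potential energy of the principal eigenfunction is at most `2d`. -/
theorem aux_energy {d : ℕ} (a : ℝ) (W : (Fin d → ℤ) → ℝ) (lam : ℝ) (f : (Fin d → ℤ) → ℝ)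
    (hW : W 0 = 0) (h : IsPrincipalEigenpair (QBox d a) (fun x => -(W x)) lam f)
    (h0C : (0 : Fin d → ℤ) ∈ QBox d a) :
    ∑ x ∈ QBox d a, W x * f x ^ 2 ≤ 2 * (d : ℝ) := by
  obtain ⟨hpair, hnorm, hnn, -⟩ := h
  have hf0 : 0 < f 0 := by
    refine lt_of_le_of_ne (hnn 0) fun hne => ?_
    have hz := aux_zero a _ lam f hpair hnn hne.symm
    have : ∑ x ∈ QBox d a, f x ^ 2 = 0 := by
      refine Finset.sum_eq_zero fun x hx => ?_
      rw [hz (∑ i, |x i|).toNat x hx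
        (Int.toNat_of_nonneg (Finset.sum_nonneg fun j _ => abs_nonneg _)).symm]
      norm_num
    linarith
  have hlam : -(2 * (d : ℝ)) ≤ lam := by
    have he := hpair.2 0 h0C
    have hs : 0 ≤ ∑ y ∈ QBox d a, if Adj 0 y then f y else 0 :=
      Finset.sum_nonneg fun y _ => by
        split_ifs
        · exact hnn y
        · exact le_refl _
    beta_reduce at he
    rw [hW] at he
    have : 0 ≤ (lam + 2 * (d : ℝ)) * f 0 := by linarith
    have := nonneg_of_mul_nonneg_left this hf0
    linarith
  have hform := aux_form (QBox d a) f
  rw [hnorm] at hform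
  have hsum : ∑ x ∈ QBox d a, f x * (∑ y ∈ QBox d a, if Adj x y then f y else 0)
      = ∑ x ∈ QBox d a, ((2 * (d : ℝ) + lam) * f x ^ 2 + W x * f x ^ 2) := by
    refine Finset.sum_congr rfl fun x hx => ?_
    have he := hpair.2 x hx
    linear_combination f x * he
  rw [Finset.sum_add_distrib, ← Finset.mul_sum, hnorm] at hsum
  linarith

/-- Lemma 2.7 (i).
With `θ = 2d+1`: for every `s ∈ ℝ` there is `L₀` such that for all `L ≥ L₀` and every
`z ∈ ℤ^d`, if `max_{Q_{R_L+r_L,z}} ξ_L ≤ a_L − θ`, then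
`max_{Q_{R_L,z}} Ξ_L < a_L^Ξ − s/a_L`, where `Ξ_L = ξ_L + Φ_L` and
`a_L^Ξ = a_L √(1+τ_L²)`. -/
theorem Xi_max_requires_large_xi
    {d : ℕ} (hd : 1 ≤ d) {Ω : Type} [MeasurableSpace Ω] (S : GaussSetting d Ω)
    (c c' : ℝ) (hSR : S.ShortRangeDecay c c')
    (hLR : S.LongRangeDecay)
    (hA1 : S.Assumption1)
    (M : MesoData S) (hA2 : Assumption2 S M) :
    ∀ s : ℝ, ∃ L₀ : ℕ, ∀ L : ℕ, L₀ ≤ L → ∀ z : Fin d → ℤ, ∀ ω : Ω,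
      (∀ x ∈ QBoxAt (M.RL L + M.rL L) z, S.ξ L ω x ≤ S.aL L - (2 * (d : ℝ) + 1)) →
      ∀ x ∈ QBoxAt (M.RL L) z,
        S.ξ L ω x + S.Phi M.rL M.phiBar L x ω
          < S.aL L * Real.sqrt (1 + M.tau L ^ 2) - s / S.aL L := by
  intro s
  obtain ⟨hc, -, hSR⟩ := hSR
  have hev := hA1.eventually (gt_mem_nhds
    (show (0 : ℝ) < 1 / (|s| + (2 * (d : ℝ) + 1)) by positivity))
  obtain ⟨N, hN⟩ := eventually_atTop.1 hev
  refine ⟨max N 2, fun L hL z ω hmax x hx => ?_⟩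
  have hL2 : 2 ≤ L := le_trans (le_max_right _ _) hL
  have hs0 := abs_nonneg s
  have hd0 : (0 : ℝ) ≤ d := Nat.cast_nonneg d
  have ha := S.aL_pos L hL2
  have hdp := S.dL_pos L hL2
  have hd1 : 1 ≤ S.dL L := by
    obtain ⟨⟨y, -, hy⟩, -⟩ := S.dL_def L hL2
    have := S.v_nonneg L y
    rw [← hy, sub_nonneg, div_le_one hdp] at this
    exact this
  have hbig : |s| + (2 * (d : ℝ) + 1) < S.aL L := by
    have := hN L (le_trans (le_max_left _ _) hL)
    rw [div_lt_div_iff₀ ha (by positivity)] at this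
    nlinarith
  set a := S.aL L with hadef
  have hP := M.principal L hL2
  have hQne : (QBox d (M.rL L)).Nonempty := by
    rw [Finset.nonempty_iff_ne_empty]
    intro he
    have := hP.2.1
    rw [he] at this
    simp at this
  have h0C : (0 : Fin d → ℤ) ∈ QBox d (M.rL L) := by
    obtain ⟨y, hy⟩ := hQne
    rw [mem_QBox] at hy ⊢
    intro i
    have := hy i
    simp only [Pi.zero_apply, Int.cast_zero]
    constructor <;> linarith [this.1, this.2]
  have hshift : ∀ y ∈ QBox d (M.rL L), y + x ∈ QBoxAt (M.RL L + M.rL L) z := by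
    intro y hy
    unfold QBoxAt at hx ⊢
    obtain ⟨w, hw, rfl⟩ := Finset.mem_image.1 hx
    refine Finset.mem_image.2 ⟨y + w, ?_, by abel⟩
    rw [mem_QBox] at hw hy ⊢
    intro i
    have h1 := hw i
    have h2 := hy i
    simp only [Pi.add_apply, Int.cast_add]
    constructor <;> linarith [h1.1, h1.2, h2.1, h2.2]
  have hen := aux_energy (M.rL L) (S.shape L) (M.lamBar L) (M.phiBar L)
    (by simp [GaussSetting.shape, S.v_zero]) hP h0C
  have hnorm := hP.2.1
  rw [← Finset.add_sum_erase _ _ h0C] at hen hnorm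
  have hsh0 : S.shape L 0 = 0 := by simp [GaussSetting.shape, S.v_zero]
  rw [hsh0, zero_mul, zero_add] at hen
  have hv1 : ∀ y ∈ (QBox d (M.rL L)).erase 0, S.v L y ≤ 1 := by
    intro y hy
    have := (hSR L hL2 y (Finset.ne_of_mem_erase hy)).2
    have : 0 ≤ c / S.dL L := by positivity
    linarith
  set E := (QBox d (M.rL L)).erase 0 with hE
  have hx0 : S.ξ L ω x ≤ a - (2 * (d : ℝ) + 1) := hmax x (by simpa using hshift 0 h0C)
  -- coefficient of ξ(x)
  have hcoef : ∑ y ∈ E, M.phiBar L y ^ 2 * S.v L y ≤ 1 := by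
    have h1 : ∑ y ∈ E, M.phiBar L y ^ 2 * S.v L y ≤ ∑ y ∈ E, M.phiBar L y ^ 2 :=
      Finset.sum_le_sum fun y hy => by nlinarith [hv1 y hy, sq_nonneg (M.phiBar L y)]
    nlinarith [sq_nonneg (M.phiBar L 0)]
  have hPhi : S.Phi M.rL M.phiBar L x ω = ∑ y ∈ E, M.phiBar L y ^ 2 * S.ξ L ω (y + x)
      - S.ξ L ω x * ∑ y ∈ E, M.phiBar L y ^ 2 * S.v L y := by
    unfold GaussSetting.Phi GaussSetting.zeta
    rw [Finset.mul_sum, ← Finset.sum_sub_distrib]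
    refine Finset.sum_congr rfl fun y _ => ?_
    rw [add_sub_cancel_right]
    ring
  have hsum1 : ∑ y ∈ E, M.phiBar L y ^ 2 * S.ξ L ω (y + x)
      ≤ ∑ y ∈ E, M.phiBar L y ^ 2 * (a - (2 * (d : ℝ) + 1)) :=
    Finset.sum_le_sum fun y hy => mul_le_mul_of_nonneg_left
      (hmax _ (hshift y (Finset.mem_of_mem_erase hy))) (sq_nonneg _)
  rw [← Finset.sum_mul] at hsum1
  have hshape : ∑ y ∈ E, S.shape L y * M.phiBar L y ^ 2
      = a * (∑ y ∈ E, M.phiBar L y ^ 2 - ∑ y ∈ E, M.phiBar L y ^ 2 * S.v L y) := by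
    rw [← Finset.sum_sub_distrib, Finset.mul_sum]
    refine Finset.sum_congr rfl fun y _ => ?_
    unfold GaussSetting.shape
    ring
  have hdiff : 0 ≤ ∑ y ∈ E, M.phiBar L y ^ 2 - ∑ y ∈ E, M.phiBar L y ^ 2 * S.v L y := by
    rw [← Finset.sum_sub_distrib]
    exact Finset.sum_nonneg fun y hy => by nlinarith [hv1 y hy, sq_nonneg (M.phiBar L y)]
  rw [hshape] at hen
  rw [hPhi]
  set A := ∑ y ∈ E, M.phiBar L y ^ 2
  set B := ∑ y ∈ E, M.phiBar L y ^ 2 * S.v L y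
  have hup : S.ξ L ω x * (1 - B) ≤ (a - (2 * (d : ℝ) + 1)) * (1 - B) :=
    mul_le_mul_of_nonneg_right hx0 (by linarith)
  have hθ : 0 ≤ (2 * (d : ℝ) + 1) * (A - B) := by positivity
  have hle : a ≤ a * Real.sqrt (1 + M.tau L ^ 2) := by
    have : 1 ≤ Real.sqrt (1 + M.tau L ^ 2) :=
      Real.one_le_sqrt.2 (by nlinarith [sq_nonneg (M.tau L)])
    nlinarith
  have hsa : s / a < 1 := by
    rw [div_lt_one ha]
    linarith [le_abs_self s]
  nlinarith
end

section
/- Define the rescaled fields Θ_L^ξ(x) := a_L(ξ_L(x) − a_L) and Θ_L^Ξ(x) := a_L(Ξ_L(x) − a_L^Ξ). Then for every z ∈ ℤ^d and every s ∈ ℝ: (ii) for χ = ξ and for χ = Ξ, (L/R_L)^d · P( there exist x ≠ y in Q_{R_L,z} with Θ_L^χ(x) ≥ −s and Θ_L^χ(y) ≥ −s ) → 0 as L → ∞; (iii) with w_{L,z} the maximiser of ξ_L over Q_{R_L,z} and w_{L,z}^Ξ the maximiser of Ξ_L over Q_{R_L,z}, (L/R_L)^d · P( max_{x ∈ Q_{R_L,z}}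 Ξ_L(x) ≥ a_L^Ξ − s/a_L and w_{L,z} ≠ w_{L,z}^Ξ ) → 0 as L → ∞. -/
open MeasureTheory ProbabilityTheory Filter Finset

/-- Gaussian upper tail bound. -/
lemma gauss_tail {Ω : Type} [MeasurableSpace Ω] (P : Measure Ω) [IsProbabilityMeasure P]
    (X : Ω → ℝ) (hX : Measurable X) (v : NNReal) (hlaw : Measure.map X P = gaussianReal 0 v)
    (V t : ℝ) (hV : 0 < V) (hvV : (v : ℝ) ≤ V) (ht : 0 ≤ t) :
    P {ω | t ≤ X ω} ≤ ENNReal.ofReal (Real.exp (-(t ^ 2 / (2 * V)))) := by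
  have h0 : 0 ≤ t / V := div_nonneg ht hV.le
  have hint : Integrable (fun ω => Real.exp (t / V * X ω)) P := by
    have h := integrable_exp_mul_gaussianReal (μ := 0) (v := v) (t / V)
    rw [← hlaw] at h
    exact (integrable_map_measure (by fun_prop) hX.aemeasurable).1 h
  have h1 := measure_ge_le_exp_mul_mgf (μ := P) (X := X) t h0 hint
  rw [mgf_gaussianReal hlaw] at h1
  rw [← ENNReal.ofReal_toReal (measure_ne_top P _)]
  apply ENNReal.ofReal_le_ofReal
  refine h1.trans ?_
  rw [← Real.exp_add]
  apply Real.exp_le_exp.2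
  have h2 : (v : ℝ) * (t / V) ^ 2 / 2 ≤ V * (t / V) ^ 2 / 2 := by gcongr
  have h3 : V * (t / V) ^ 2 / 2 - t / V * t = -(t ^ 2 / (2 * V)) := by
    field_simp; ring
  linarith

/-- Crude Gaussian lower tail bound. -/
lemma gauss_lower (a : ℝ) (ha : 0 < a) :
    ENNReal.ofReal ((Real.sqrt (2 * Real.pi))⁻¹ * Real.exp (-((a + 1) ^ 2 / 2)))
      ≤ gaussianReal 0 1 (Set.Ioi a) := by
  rw [gaussianReal_apply 0 (by norm_num)]
  calc _ = ∫⁻ _x in Set.Ioc a (a + 1),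
          ENNReal.ofReal ((Real.sqrt (2 * Real.pi))⁻¹ * Real.exp (-((a + 1) ^ 2 / 2))) := by
        simp
    _ ≤ ∫⁻ x in Set.Ioc a (a + 1), gaussianPDF 0 1 x := by
        apply setLIntegral_mono (measurable_gaussianPDF 0 1)
        intro x hx
        rw [gaussianPDF, gaussianPDFReal]
        apply ENNReal.ofReal_le_ofReal
        simp only [NNReal.coe_one, mul_one, sub_zero]
        gcongr
        rw [neg_div]
        have := hx.1
        have := hx.2
        apply neg_le_neg
        gcongr
        linarith
    _ ≤ _ := lintegral_mono_set Set.Ioc_subset_Ioi_self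

section
variable {d : ℕ} {Ω : Type} [MeasurableSpace Ω]

lemma law_single (S : GaussSetting d Ω) (L : ℕ) (hL : 2 ≤ L) :
    Measure.map (fun ω => S.ξ L ω 0) S.P = gaussianReal 0 1 := by
  have h := S.gaussian L hL {0} (fun _ => 1)
  simpa [S.v_zero] using h

lemma L_pow_le (S : GaussSetting d Ω) (L : ℕ) (hL : 2 ≤ L) :
    (L : ℝ) ^ d ≤ Real.sqrt (2 * Real.pi) * Real.exp ((S.aL L + 1) ^ 2 / 2) := by
  have h := gauss_lower (S.aL L) (S.aL_pos L hL)
  rw [← law_single S L hL, Measure.map_apply (S.meas L 0) measurableSet_Ioi] at h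
  have h2 := S.aL_def L hL
  have h3 : (fun ω => S.ξ L ω 0) ⁻¹' Set.Ioi (S.aL L) = {ω | S.aL L < S.ξ L ω 0} := rfl
  rw [h3, h2, ENNReal.ofReal_le_ofReal_iff (by positivity)] at h
  have hLp : (0 : ℝ) < (L : ℝ) ^ d := by
    have : (0 : ℝ) < L := by exact_mod_cast (by omega : 0 < L)
    positivity
  rw [le_div_iff₀ hLp, Real.exp_neg, ← mul_inv] at h
  have hp : 0 < Real.sqrt (2 * Real.pi) * Real.exp ((S.aL L + 1) ^ 2 / 2) := by positivity
  rw [inv_mul_le_iff₀ hp] at h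
  linarith

lemma c_le_dL (S : GaussSetting d Ω) (hd : 1 ≤ d) (c c' : ℝ) (hSR : S.ShortRangeDecay c c')
    (L : ℕ) (hL : 2 ≤ L) : c / S.dL L ≤ 1 := by
  have hne : (fun _ => 1 : Fin d → ℤ) ≠ 0 := by
    intro h
    have := congrFun h ⟨0, hd⟩
    simp at this
  have h := (hSR.2.2 L hL _ hne).2
  have h0 := S.v_nonneg L (fun _ => 1)
  linarith

lemma tail_pair (S : GaussSetting d Ω) (hd : 1 ≤ d) (c c' : ℝ) (hSR : S.ShortRangeDecay c c')
    (L : ℕ) (hL : 2 ≤ L) (x y : Fin d → ℤ) (hxy : x ≠ y) (t : ℝ) (ht : 0 ≤ t) :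
    S.P {ω | t ≤ (S.ξ L ω x + S.ξ L ω y) / 2} ≤
      ENNReal.ofReal (Real.exp (-(t ^ 2 / (2 * (1 - c / S.dL L / 2))))) := by
  have := S.hP
  have hc := c_le_dL S hd c c' hSR L hL
  have h := S.gaussian L hL {x, y} (fun _ => 1 / 2)
  have e : (fun ω => ∑ u ∈ ({x, y} : Finset (Fin d → ℤ)), (1 / 2 : ℝ) * S.ξ L ω u)
      = fun ω => (S.ξ L ω x + S.ξ L ω y) / 2 := by
    funext ω
    rw [Finset.sum_pair hxy]; ring
  rw [e] at h
  have h1 := (hSR.2.2 L hL (x - y) (sub_ne_zero.2 hxy)).2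
  have h2 := (hSR.2.2 L hL (y - x) (sub_ne_zero.2 hxy.symm)).2
  refine gauss_tail S.P _ (((S.meas L x).add (S.meas L y)).div_const 2) _ h _ t (by linarith) ?_ ht
  rw [Real.coe_toNNReal']
  apply max_le _ (by linarith)
  rw [Finset.sum_pair hxy, Finset.sum_pair hxy, Finset.sum_pair hxy]
  simp only [sub_self, S.v_zero]
  linarith

lemma phi_law (S : GaussSetting d Ω) (r : ℕ → ℝ) (phiBar : ℕ → (Fin d → ℤ) → ℝ)
    (L : ℕ) (hL : 2 ≤ L) : ∃ V : NNReal, ∀ y : Fin d → ℤ,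
      Measurable (S.Phi r phiBar L y) ∧ Measure.map (S.Phi r phiBar L y) S.P = gaussianReal 0 V := by
  set B := (QBox d (r L)).erase 0 with hB
  have h0B : (0 : Fin d → ℤ) ∉ B := by simp [hB]
  set g : (Fin d → ℤ) → ℝ := fun u =>
    if u = 0 then -∑ x ∈ B, phiBar L x ^ 2 * S.v L x else phiBar L u ^ 2 with hg
  refine ⟨Real.toNNReal (∑ x ∈ insert 0 B, ∑ x' ∈ insert 0 B, g x * g x' * S.v L (x - x')), ?_⟩
  intro y
  constructor
  · unfold GaussSetting.Phi GaussSetting.zeta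
    have := S.meas L
    fun_prop
  · have h := S.gaussian L hL ((insert 0 B).map (addRightEmbedding y)) (fun u => g (u - y))
    simp only [Finset.sum_map, addRightEmbedding_apply, add_sub_cancel_right,
      add_sub_add_right_eq_sub] at h
    rw [← h]
    congr 1
    funext ω
    rw [Finset.sum_insert h0B]
    unfold GaussSetting.Phi GaussSetting.zeta
    have e : ∑ x ∈ B, g x * S.ξ L ω (x + y) = ∑ x ∈ B, phiBar L x ^ 2 * S.ξ L ω (x + y) := by
      apply Finset.sum_congr rfl
      intro x hx
      have : x ≠ 0 := fun h => h0B (h ▸ hx)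
      simp [hg, this]
    rw [e, ← hB]
    simp only [hg, if_true, zero_add, add_sub_cancel_right, mul_sub, Finset.sum_sub_distrib]
    have e2 : ∑ x ∈ B, phiBar L x ^ 2 * (S.ξ L ω y * S.v L x)
        = (∑ x ∈ B, phiBar L x ^ 2 * S.v L x) * S.ξ L ω y := by
      rw [Finset.sum_mul]
      apply Finset.sum_congr rfl
      intro x _
      ring
    rw [e2]; ring

lemma tail_phi (S : GaussSetting d Ω) (M : MesoData S) (L : ℕ) (hL : 2 ≤ L) (y : Fin d → ℤ)
    (V t : ℝ) (hV : 0 < V) (hτ : M.tau L ^ 2 ≤ V) (ht : 0 ≤ t) :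
    S.P {ω | t ≤ S.Phi M.rL M.phiBar L y ω} ≤
      ENNReal.ofReal (Real.exp (-(t ^ 2 / (2 * V)))) := by
  have := S.hP
  obtain ⟨v, hv⟩ := phi_law S M.rL M.phiBar L hL
  refine gauss_tail S.P _ (hv y).1 v (hv y).2 V t hV ?_ ht
  have h := M.tau_def L hL
  have h2 : variance (S.Phi M.rL M.phiBar L 0) S.P = v := by
    have := variance_id_gaussianReal (μ := 0) (v := v)
    rw [← (hv 0).2, variance_map aemeasurable_id (hv 0).1.aemeasurable] at this
    simpa using this
  rw [h2] at h
  linarith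

lemma card_QBoxAt (R : ℝ) (z : Fin d → ℤ) (hR : 2 ≤ R) :
    ((QBoxAt R z).card : ℝ) ≤ (2 * R) ^ d := by
  have h1 : (QBoxAt R z).card ≤ (QBox d R).card := Finset.card_image_le
  have h2 : ((QBox d R).card : ℝ) ≤ (2 * R) ^ d := by
    unfold QBox
    rw [Pi.card_Icc]
    simp only [Int.card_Icc, Finset.prod_const, Finset.card_univ, Fintype.card_fin]
    push_cast
    apply pow_le_pow_left₀ (by positivity)
    have hf := Int.floor_le (R / 2)
    have hc := Int.le_ceil (-(R / 2))
    have h3 : (((⌊R / 2⌋ + 1 - ⌈-(R / 2)⌉).toNat : ℤ) : ℝ) ≤ 2 * R := by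
      rw [Int.toNat_eq_max]
      push_cast
      apply max_le <;> linarith
    exact_mod_cast h3
  exact le_trans (by exact_mod_cast h1) h2

lemma QBoxAt_small (R : ℝ) (z x : Fin d → ℤ) (hR : R < 2) (hx : x ∈ QBoxAt R z) : x = z := by
  unfold QBoxAt QBox at hx
  rw [Finset.mem_image] at hx
  obtain ⟨u, hu, rfl⟩ := hx
  rw [Finset.mem_Icc] at hu
  have : u = 0 := by
    funext i
    have h1 := hu.1 i
    have h2 := hu.2 i
    simp only at h1 h2
    have h3 : ⌊R / 2⌋ < 1 := Int.floor_lt.2 (by push_cast; linarith)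
    have h4 : (-1 : ℤ) < ⌈-(R / 2)⌉ := Int.lt_ceil.2 (by push_cast; linarith)
    simp only [Pi.zero_apply]
    omega
  simp [this]

/-- The union of all bad pair events. -/
def badEvent (S : GaussSetting d Ω) (M : MesoData S) (c : ℝ) (z : Fin d → ℤ) (s : ℝ) (L : ℕ) :
    Set Ω :=
  {ω | ∃ x ∈ QBoxAt (M.RL L) z, ∃ y ∈ QBoxAt (M.RL L) z, x ≠ y ∧
    (S.aL L - s / S.aL L - c / S.dL L / 16 * S.aL L ≤ (S.ξ L ω x + S.ξ L ω y) / 2 ∨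
     c / S.dL L / 16 * S.aL L ≤ S.Phi M.rL M.phiBar L x ω ∨
     c / S.dL L / 16 * S.aL L ≤ S.Phi M.rL M.phiBar L y ω)}

/-- Bounds for the exponent: `q = c / d_L`. -/
lemma exponent_bound (a q s : ℝ) (ha : 0 < a) (hq : 0 < q) (hq1 : q ≤ 1) :
    a ^ 2 / 2 + q * a ^ 2 / 8 - 2 * |s| ≤
      (a - s / a - q / 16 * a) ^ 2 / (2 * (1 - q / 2)) := by
  have h1 : (a - s / a - q / 16 * a) ^ 2 ≥ a ^ 2 * (1 - q / 8) - 2 * |s| := by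
    have e : (a - s / a - q / 16 * a) ^ 2
        = a ^ 2 * (1 - q / 16) ^ 2 - 2 * s * (1 - q / 16) + (s / a) ^ 2 := by
      field_simp; ring
    rw [e]
    have : s * (1 - q / 16) ≤ |s| := by
      have := le_abs_self s
      have := abs_nonneg s
      nlinarith
    nlinarith [sq_nonneg (s / a), sq_nonneg (a * q)]
  rw [le_div_iff₀ (by linarith)]
  have h2 := abs_nonneg s
  have h3 : 0 < a ^ 2 := by positivity
  have h4 : q ^ 2 ≤ q := by nlinarith
  have h5 : |s| * q ≤ |s| := by nlinarith
  have h6 : 0 ≤ a ^ 2 * q := by positivity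
  have h7 : 0 ≤ a ^ 2 * q ^ 2 := by positivity
  nlinarith

lemma bad_prob (S : GaussSetting d Ω) (hd : 1 ≤ d) (c c' : ℝ) (hSR : S.ShortRangeDecay c c')
    (M : MesoData S) (z : Fin d → ℤ) (s : ℝ) (L : ℕ) (hL : 2 ≤ L)
    (hτ : M.tau L ≤ c / S.dL L / 32) (hs : 4 * |s| ≤ S.aL L ^ 2) :
    S.P (badEvent S M c z s L) ≤
      ENNReal.ofReal (((QBoxAt (M.RL L) z).card : ℝ) ^ 2 * (3 *
        Real.exp (-(S.aL L ^ 2 / 2 + c / S.dL L * S.aL L ^ 2 / 8 - 2 * |s|)))) := by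
  set a := S.aL L with ha_def
  set q := c / S.dL L with hq_def
  have ha : 0 < a := S.aL_pos L hL
  have hq : 0 < q := div_pos hSR.1 (S.dL_pos L hL)
  have hq1 : q ≤ 1 := c_le_dL S hd c c' hSR L hL
  set E := Real.exp (-(a ^ 2 / 2 + q * a ^ 2 / 8 - 2 * |s|)) with hE
  set Q := QBoxAt (M.RL L) z with hQ
  have ht : 0 ≤ a - s / a - q / 16 * a := by
    have h1 : s / a ≤ a / 4 := by
      rw [div_le_iff₀ ha]
      have := le_abs_self s
      nlinarith
    nlinarith
  have hphi : ∀ y, S.P {ω | q / 16 * a ≤ S.Phi M.rL M.phiBar L y ω} ≤ ENNReal.ofReal E := by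
    intro y
    refine (tail_phi S M L hL y ((q / 32) ^ 2) (q / 16 * a) (by positivity) ?_
      (by positivity)).trans ?_
    · exact pow_le_pow_left₀ (M.tau_nonneg L) hτ 2
    · apply ENNReal.ofReal_le_ofReal
      apply Real.exp_le_exp.2
      have e : (q / 16 * a) ^ 2 / (2 * (q / 32) ^ 2) = 2 * a ^ 2 := by
        field_simp; norm_num
      rw [e]
      have := abs_nonneg s
      nlinarith [sq_nonneg a]
  have hpair : ∀ x y, x ≠ y →
      S.P {ω | a - s / a - q / 16 * a ≤ (S.ξ L ω x + S.ξ L ω y) / 2} ≤ ENNReal.ofReal E := by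
    intro x y hxy
    refine (tail_pair S hd c c' hSR L hL x y hxy _ ht).trans ?_
    apply ENNReal.ofReal_le_ofReal
    apply Real.exp_le_exp.2
    exact neg_le_neg (exponent_bound a q s ha hq hq1)
  have hsub : badEvent S M c z s L ⊆ ⋃ p ∈ (Q ×ˢ Q).filter (fun p => p.1 ≠ p.2),
      ({ω | a - s / a - q / 16 * a ≤ (S.ξ L ω p.1 + S.ξ L ω p.2) / 2} ∪
        ({ω | q / 16 * a ≤ S.Phi M.rL M.phiBar L p.1 ω} ∪
          {ω | q / 16 * a ≤ S.Phi M.rL M.phiBar L p.2 ω})) := by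
    rintro ω ⟨x, hx, y, hy, hxy, h⟩
    simp only [Set.mem_iUnion]
    refine ⟨(x, y), ?_, h⟩
    simp only [Finset.mem_filter, Finset.mem_product]
    exact ⟨⟨hx, hy⟩, hxy⟩
  calc S.P (badEvent S M c z s L) ≤ _ := measure_mono hsub
    _ ≤ ∑ p ∈ (Q ×ˢ Q).filter (fun p => p.1 ≠ p.2), _ := measure_biUnion_finset_le _ _
    _ ≤ ∑ p ∈ (Q ×ˢ Q).filter (fun p => p.1 ≠ p.2), ENNReal.ofReal (3 * E) := by
        apply Finset.sum_le_sum
        intro p hp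
        have hne : p.1 ≠ p.2 := (Finset.mem_filter.1 hp).2
        have hE0 : 0 ≤ E := (Real.exp_pos _).le
        have e : ENNReal.ofReal (3 * E)
            = ENNReal.ofReal E + (ENNReal.ofReal E + ENNReal.ofReal E) := by
          rw [← ENNReal.ofReal_add hE0 hE0, ← ENNReal.ofReal_add hE0 (by positivity)]
          congr 1; ring
        rw [e]
        refine (measure_union_le _ _).trans (add_le_add (hpair _ _ hne) ?_)
        exact (measure_union_le _ _).trans (add_le_add (hphi _) (hphi _))
    _ ≤ ∑ p ∈ (Q ×ˢ Q), ENNReal.ofReal (3 * E) :=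
        Finset.sum_le_sum_of_subset (Finset.filter_subset _ _)
    _ = _ := by
        rw [Finset.sum_const, Finset.card_product, nsmul_eq_mul,
          ← ENNReal.ofReal_natCast, ← ENNReal.ofReal_mul (by positivity)]
        congr 1
        push_cast; ring

lemma bad_tendsto (S : GaussSetting d Ω) (hd : 1 ≤ d) (c c' : ℝ) (hSR : S.ShortRangeDecay c c')
    (hA1 : S.Assumption1) (M : MesoData S) (hA2 : Assumption2 S M) (z : Fin d → ℤ) (s : ℝ) :
    Tendsto (fun L : ℕ => ENNReal.ofReal (((L : ℝ) / M.RL L) ^ d) * S.P (badEvent S M c z s L))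
      atTop (nhds 0) := by
  have hc : 0 < c := hSR.1
  have hL2 : ∀ᶠ L : ℕ in atTop, 2 ≤ L := eventually_ge_atTop 2
  have hA1' : Tendsto (fun L => S.dL L / S.aL L) atTop (nhds 0) := hA1
  -- `a_L / d_L → ∞`
  have had : Tendsto (fun L => S.aL L / S.dL L) atTop atTop := by
    have h : Tendsto (fun L => S.dL L / S.aL L) atTop (nhdsWithin 0 (Set.Ioi 0)) := by
      refine tendsto_nhdsWithin_iff.2 ⟨hA1', ?_⟩
      filter_upwards [hL2] with L hL
      exact div_pos (S.dL_pos L hL) (S.aL_pos L hL)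
    refine h.inv_tendsto_nhdsGT_zero.congr ?_
    intro L
    simp
  have ha : Tendsto S.aL atTop atTop := by
    refine tendsto_atTop_mono' _ ?_ (had.const_mul_atTop hc)
    filter_upwards [hL2] with L hL
    have h1 := c_le_dL S hd c c' hSR L hL
    have h2 := S.aL_pos L hL
    have h3 := S.dL_pos L hL
    calc c * (S.aL L / S.dL L) = c / S.dL L * S.aL L := by ring
      _ ≤ 1 * S.aL L := by gcongr
      _ = S.aL L := one_mul _
  have hD : Tendsto (fun L => S.aL L * (S.aL L / S.dL L)) atTop atTop := ha.atTop_mul_atTop₀ had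
  -- `d_L τ_L → 0`
  have hdt : Tendsto (fun L => S.dL L * M.tau L) atTop (nhds 0) := by
    have h1 : Tendsto (fun L => Real.sqrt (S.dL L / S.aL L)) atTop (nhds 0) := by
      have := (Real.continuous_sqrt.tendsto 0).comp hA1'
      simpa [Function.comp_def] using this
    have h2 : Tendsto (fun L => S.aL L * M.tau L * Real.sqrt (S.dL L / S.aL L) *
      Real.sqrt (S.dL L / S.aL L)) atTop (nhds (0 * 0)) := Tendsto.mul hA2 h1
    rw [mul_zero] at h2
    refine h2.congr' ?_
    filter_upwards [hL2] with L hL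
    have ha := S.aL_pos L hL
    have hd := S.dL_pos L hL
    rw [mul_assoc, Real.mul_self_sqrt (by positivity)]
    field_simp
  have hτ : ∀ᶠ L : ℕ in atTop, M.tau L ≤ c / S.dL L / 32 := by
    filter_upwards [hL2, hdt.eventually_le_const (show (0 : ℝ) < c / 32 by positivity)]
      with L hL h
    have hd := S.dL_pos L hL
    rw [div_right_comm, le_div_iff₀ hd]
    linarith
  have hlogR : ∀ᶠ L : ℕ in atTop,
      (d : ℝ) * Real.log (M.RL L) ≤ c / 32 * (S.aL L * (S.aL L / S.dL L)) := by
    have hdp : (0 : ℝ) < d := by exact_mod_cast hd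
    filter_upwards [hD.eventually_gt_atTop 0,
      M.RL_upper.eventually_le_const (show (0 : ℝ) < c / 32 / d by positivity)] with L hDp h
    rw [div_le_iff₀ hDp] at h
    calc (d : ℝ) * Real.log (M.RL L)
        ≤ d * (c / 32 / d * (S.aL L * (S.aL L / S.dL L))) := by gcongr
      _ = _ := by field_simp
  have haD : ∀ᶠ L : ℕ in atTop, S.aL L ≤ c / 32 * (S.aL L * (S.aL L / S.dL L)) := by
    filter_upwards [hL2, had.eventually_ge_atTop (32 / c)] with L hL h
    have ha := S.aL_pos L hL
    calc S.aL L = c / 32 * (S.aL L * (32 / c)) := by field_simp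
      _ ≤ _ := by gcongr
  set K : ℝ := 3 * 4 ^ d * Real.sqrt (2 * Real.pi) * Real.exp (1 / 2 + 2 * |s|) with hK
  have hlim : Tendsto (fun L => ENNReal.ofReal
      (K * Real.exp (-(c / 16 * (S.aL L * (S.aL L / S.dL L)))))) atTop (nhds 0) := by
    have h1 : Tendsto (fun L => Real.exp (-(c / 16 * (S.aL L * (S.aL L / S.dL L)))))
        atTop (nhds 0) :=
      Real.tendsto_exp_neg_atTop_nhds_zero.comp (hD.const_mul_atTop (by positivity))
    have h2 := ENNReal.tendsto_ofReal (h1.const_mul K)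
    simpa using h2
  refine tendsto_of_tendsto_of_tendsto_of_le_of_le' tendsto_const_nhds hlim
    (Eventually.of_forall fun _ => zero_le) ?_
  have hs2 : ∀ᶠ L : ℕ in atTop, 4 * |s| ≤ S.aL L ^ 2 :=
    (((tendsto_pow_atTop two_ne_zero).comp ha).eventually_ge_atTop (4 * |s|))
  filter_upwards [hL2, hτ, hlogR, haD, hs2] with L hL hτ hlogR haD hs2
  by_cases hR : M.RL L < 2
  · have : badEvent S M c z s L = ∅ := by
      apply Set.eq_empty_of_forall_notMem
      rintro ω ⟨x, hx, y, hy, hxy, -⟩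
      exact hxy ((QBoxAt_small _ z x hR hx).trans (QBoxAt_small _ z y hR hy).symm)
    rw [this, measure_empty, mul_zero]
    exact zero_le
  · push Not at hR
    have hR0 : 0 < M.RL L := by linarith
    refine (mul_le_mul_right (bad_prob S hd c c' hSR M z s L hL hτ hs2) _).trans ?_
    rw [← ENNReal.ofReal_mul (by positivity)]
    apply ENNReal.ofReal_le_ofReal
    have hcard := card_QBoxAt (M.RL L) z hR
    have hLp := L_pow_le S L hL
    have hRexp : (M.RL L) ^ d = Real.exp (d * Real.log (M.RL L)) := by
      rw [mul_comm, Real.exp_mul, Real.exp_log hR0, Real.rpow_natCast]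
    set a := S.aL L with ha_def
    set D := a * (a / S.dL L) with hD_def
    have hq : c / S.dL L * a ^ 2 / 8 = c / 8 * D := by rw [hD_def]; ring
    rw [hq]
    calc ((L : ℝ) / M.RL L) ^ d * (((QBoxAt (M.RL L) z).card : ℝ) ^ 2 *
          (3 * Real.exp (-(a ^ 2 / 2 + c / 8 * D - 2 * |s|))))
        ≤ ((L : ℝ) / M.RL L) ^ d * (((2 * M.RL L) ^ d) ^ 2 *
          (3 * Real.exp (-(a ^ 2 / 2 + c / 8 * D - 2 * |s|)))) := by gcongr
      _ = (L : ℝ) ^ d * (3 * 4 ^ d * M.RL L ^ d *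
          Real.exp (-(a ^ 2 / 2 + c / 8 * D - 2 * |s|))) := by
          have h4 : (4 : ℝ) ^ d = (2 ^ d) ^ 2 := by
            rw [← pow_mul, mul_comm, pow_mul]; norm_num
          rw [div_pow, mul_pow, h4]
          field_simp
      _ ≤ (Real.sqrt (2 * Real.pi) * Real.exp ((a + 1) ^ 2 / 2)) * (3 * 4 ^ d * M.RL L ^ d *
          Real.exp (-(a ^ 2 / 2 + c / 8 * D - 2 * |s|))) := by gcongr
      _ = 3 * 4 ^ d * Real.sqrt (2 * Real.pi) * (Real.exp ((a + 1) ^ 2 / 2) *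
          Real.exp (d * Real.log (M.RL L)) *
          Real.exp (-(a ^ 2 / 2 + c / 8 * D - 2 * |s|))) := by rw [hRexp]; ring
      _ ≤ 3 * 4 ^ d * Real.sqrt (2 * Real.pi) *
          (Real.exp (1 / 2 + 2 * |s|) * Real.exp (-(c / 16 * D))) := by
          rw [← Real.exp_add, ← Real.exp_add, ← Real.exp_add]
          apply mul_le_mul_of_nonneg_left _ (by positivity)
          apply Real.exp_le_exp.2
          nlinarith
      _ = K * Real.exp (-(c / 16 * D)) := by rw [hK]; ring

lemma tendsto_of_subset_bad (S : GaussSetting d Ω) (hd : 1 ≤ d) (c c' : ℝ)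
    (hSR : S.ShortRangeDecay c c')
    (hA1 : S.Assumption1) (M : MesoData S) (hA2 : Assumption2 S M) (z : Fin d → ℤ) (s : ℝ)
    (E : ℕ → Set Ω) (hE : ∀ L, 2 ≤ L → E L ⊆ badEvent S M c z s L) :
    Tendsto (fun L : ℕ => ENNReal.ofReal (((L : ℝ) / M.RL L) ^ d) * S.P (E L))
      atTop (nhds 0) := by
  refine tendsto_of_tendsto_of_tendsto_of_le_of_le' tendsto_const_nhds
    (bad_tendsto S hd c c' hSR hA1 M hA2 z s) (Eventually.of_forall fun _ => zero_le) ?_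
  filter_upwards [eventually_ge_atTop 2] with L hL
  exact mul_le_mul_right (measure_mono (hE L hL)) _

end

/-- Lemma 2.7 (ii) and (iii).
With `Θ_L^ξ(x) = a_L(ξ_L(x) − a_L)` and `Θ_L^Ξ(x) = a_L(Ξ_L(x) − a_L^Ξ)`, for every
`z ∈ ℤ^d` and `s ∈ ℝ`: (ii) for `χ = ξ` and `χ = Ξ`,
`(L/R_L)^d P(∃ x ≠ y ∈ Q_{R_L,z}, Θ_L^χ(x) ≥ −s, Θ_L^χ(y) ≥ −s) → 0`; (iii) with
`w_{L,z}` resp. `w_{L,z}^Ξ` the maximisers of `ξ_L` resp. `Ξ_L` over `Q_{R_L,z}`,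
`(L/R_L)^d P(max_{Q_{R_L,z}} Ξ_L ≥ a_L^Ξ − s/a_L ; w_{L,z} ≠ w_{L,z}^Ξ) → 0`. -/
theorem unique_max_and_same_maximiser
    {d : ℕ} (hd : 1 ≤ d) {Ω : Type} [MeasurableSpace Ω] (S : GaussSetting d Ω)
    (c c' : ℝ) (hSR : S.ShortRangeDecay c c')
    (hLR : S.LongRangeDecay)
    (hA1 : S.Assumption1)
    (M : MesoData S) (hA2 : Assumption2 S M)
    -- `w L z ω` is the maximiser of `ξ_L` over `Q_{R_L,z}`
    (w : ℕ → (Fin d → ℤ) → Ω → (Fin d → ℤ))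
    (hw_mem : ∀ L : ℕ, 2 ≤ L → ∀ z ω, w L z ω ∈ QBoxAt (M.RL L) z)
    (hw_max : ∀ L : ℕ, 2 ≤ L → ∀ z ω, ∀ x ∈ QBoxAt (M.RL L) z,
      S.ξ L ω x ≤ S.ξ L ω (w L z ω))
    -- `wΞ L z ω` is the maximiser of `Ξ_L = ξ_L + Φ_L` over `Q_{R_L,z}`
    (wΞ : ℕ → (Fin d → ℤ) → Ω → (Fin d → ℤ))
    (hwΞ_mem : ∀ L : ℕ, 2 ≤ L → ∀ z ω, wΞ L z ω ∈ QBoxAt (M.RL L) z)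
    (hwΞ_max : ∀ L : ℕ, 2 ≤ L → ∀ z ω, ∀ x ∈ QBoxAt (M.RL L) z,
      S.ξ L ω x + S.Phi M.rL M.phiBar L x ω ≤
        S.ξ L ω (wΞ L z ω) + S.Phi M.rL M.phiBar L (wΞ L z ω) ω) :
    ∀ z : Fin d → ℤ, ∀ s : ℝ,
    -- (ii) for `χ = ξ`
    (Tendsto
      (fun L : ℕ => ENNReal.ofReal (((L : ℝ) / M.RL L) ^ d) *
        S.P {ω | ∃ x ∈ QBoxAt (M.RL L) z, ∃ y ∈ QBoxAt (M.RL L) z, x ≠ y ∧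
          -s ≤ S.aL L * (S.ξ L ω x - S.aL L) ∧ -s ≤ S.aL L * (S.ξ L ω y - S.aL L)})
      atTop (nhds 0)) ∧
    -- (ii) for `χ = Ξ`
    (Tendsto
      (fun L : ℕ => ENNReal.ofReal (((L : ℝ) / M.RL L) ^ d) *
        S.P {ω | ∃ x ∈ QBoxAt (M.RL L) z, ∃ y ∈ QBoxAt (M.RL L) z, x ≠ y ∧
          -s ≤ S.aL L * ((S.ξ L ω x + S.Phi M.rL M.phiBar L x ω)
                - S.aL L * Real.sqrt (1 + M.tau L ^ 2)) ∧
          -s ≤ S.aL L * ((S.ξ L ω y + S.Phi M.rL M.phiBar L y ω)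
                - S.aL L * Real.sqrt (1 + M.tau L ^ 2))})
      atTop (nhds 0)) ∧
    -- (iii)
    (Tendsto
      (fun L : ℕ => ENNReal.ofReal (((L : ℝ) / M.RL L) ^ d) *
        S.P {ω | (S.aL L * Real.sqrt (1 + M.tau L ^ 2) - s / S.aL L ≤
            S.ξ L ω (wΞ L z ω) + S.Phi M.rL M.phiBar L (wΞ L z ω) ω) ∧
          w L z ω ≠ wΞ L z ω})
      atTop (nhds 0)) := by
  intro z s
  have key : ∀ (L : ℕ), 2 ≤ L → 0 < c / S.dL L / 16 * S.aL L ∧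
      S.aL L ≤ S.aL L * Real.sqrt (1 + M.tau L ^ 2) := by
    intro L hL
    have ha := S.aL_pos L hL
    have hdp := S.dL_pos L hL
    have hc := hSR.1
    refine ⟨by positivity, ?_⟩
    have : 1 ≤ Real.sqrt (1 + M.tau L ^ 2) := Real.one_le_sqrt.2 (by nlinarith [sq_nonneg (M.tau L)])
    nlinarith
  have conv : ∀ (L : ℕ), 2 ≤ L → ∀ X A : ℝ, -s ≤ S.aL L * (X - A) → A - s / S.aL L ≤ X := by
    intro L hL X A h
    have ha := S.aL_pos L hL
    have : -s / S.aL L ≤ X - A := by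
      rw [div_le_iff₀ ha]; linarith
    rw [neg_div] at this
    linarith
  refine ⟨tendsto_of_subset_bad S hd c c' hSR hA1 M hA2 z s _ ?_,
    tendsto_of_subset_bad S hd c c' hSR hA1 M hA2 z s _ ?_,
    tendsto_of_subset_bad S hd c c' hSR hA1 M hA2 z s _ ?_⟩
  · rintro L hL ω ⟨x, hx, y, hy, hxy, h1, h2⟩
    refine ⟨x, hx, y, hy, hxy, Or.inl ?_⟩
    have := conv L hL _ _ h1
    have := conv L hL _ _ h2
    have := (key L hL).1
    linarith
  · rintro L hL ω ⟨x, hx, y, hy, hxy, h1, h2⟩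
    refine ⟨x, hx, y, hy, hxy, ?_⟩
    have := conv L hL _ _ h1
    have := conv L hL _ _ h2
    have := key L hL
    by_contra! hcon
    obtain ⟨g1, g2, g3⟩ := hcon
    linarith
  · rintro L hL ω ⟨h1, h2⟩
    refine ⟨w L z ω, hw_mem L hL z ω, wΞ L z ω, hwΞ_mem L hL z ω, h2, ?_⟩
    have := hw_max L hL z ω _ (hwΞ_mem L hL z ω)
    have := key L hL
    by_contra! hcon
    obtain ⟨g1, g2, g3⟩ := hcon
    linarith
end
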